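/- Let char(K) ≠ 2 and ζ_4 ∉ K. If all 2-power-order roots of unity lie in K(ζ_{2𝒫}), then K(ζ_{2𝒫}) ∩ √[2^∞]{K^×} = ⟨ζ_{2^∞}, K(ζ_{2𝒫}) ∩ √{K^×}⟩ (where ζ_{2^∞} denotes all roots of unity of 2-power order) and K(ζ_{2𝒫}) ∩ K(√[2^∞]{K^×}) = K(ζ_{2^∞}, K(ζ_{2𝒫}) ∩ √{K^×}). -/

import Mathlib

noncomputable section

open IntermediateField

/-- `K^×` viewed as a subgroup of the units of the algebraic closure of `K`. -/
def baseUnits (K : Type*) [Field K] : Subgroup (AlgebraicClosure K)ˣ :=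
  (Units.map (algebraMap K (AlgebraicClosure K)).toMonoidHom).range

/-- The subgroup of `(AlgebraicClosure K)ˣ` of elements whose `m`-th power lies in `K^×`. -/
def radGroup (K : Type*) [Field K] (m : ℕ) : Subgroup (AlgebraicClosure K)ˣ where
  carrier := {x | ∃ y : K, algebraMap K (AlgebraicClosure K) y = (x : AlgebraicClosure K) ^ m}
  one_mem' := ⟨1, by simp⟩
  mul_mem' := by
    rintro a b ⟨y, hy⟩ ⟨z, hz⟩
    exact ⟨y * z, by rw [map_mul, hy, hz, Units.val_mul, mul_pow]⟩
  inv_mem' := by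
    rintro a ⟨y, hy⟩
    refine ⟨y⁻¹, ?_⟩
    rw [map_inv₀, hy, Units.val_inv_eq_inv_val, inv_pow]

lemma radGroup_le (K : Type*) [Field K] {m k : ℕ} :
    radGroup K m ≤ radGroup K (m * k) := by
  rintro x ⟨y, hy⟩
  exact ⟨y ^ k, by rw [map_pow, hy, ← pow_mul]⟩

/-- The group `√[ℓ^∞]{K^×}` of radicals of `ℓ`-power order over `K`. -/
def radInf (K : Type*) [Field K] (ℓ : ℕ) : Subgroup (AlgebraicClosure K)ˣ where
  carrier := {x | ∃ n : ℕ, x ∈ radGroup K (ℓ ^ n)}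
  one_mem' := ⟨0, one_mem _⟩
  mul_mem' := by
    rintro a b ⟨n, ha⟩ ⟨m, hb⟩
    refine ⟨n + m, mul_mem ?_ ?_⟩
    · have h : radGroup K (ℓ ^ n) ≤ radGroup K (ℓ ^ (n + m)) := by
        rw [pow_add]; exact radGroup_le K
      exact h ha
    · have h : radGroup K (ℓ ^ m) ≤ radGroup K (ℓ ^ (n + m)) := by
        rw [add_comm, pow_add]; exact radGroup_le K
      exact h hb
  inv_mem' := by
    rintro a ⟨n, ha⟩
    exact ⟨n, inv_mem ha⟩

/-- The units of the algebraic closure lying in an intermediate field `F`, as a subgroup. -/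
def unitsIn {K : Type*} [Field K] (F : IntermediateField K (AlgebraicClosure K)) :
    Subgroup (AlgebraicClosure K)ˣ where
  carrier := {x | (x : AlgebraicClosure K) ∈ F}
  one_mem' := by
    show ((1 : (AlgebraicClosure K)ˣ) : AlgebraicClosure K) ∈ F
    simpa using one_mem F
  mul_mem' := by
    intro a b ha hb
    show ((a * b : (AlgebraicClosure K)ˣ) : AlgebraicClosure K) ∈ F
    rw [Units.val_mul]
    exact mul_mem ha hb
  inv_mem' := by
    intro x hx
    show ((x⁻¹ : (AlgebraicClosure K)ˣ) : AlgebraicClosure K) ∈ F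
    rw [Units.val_inv_eq_inv_val]
    exact inv_mem hx

/-- `K(ζ_{2𝒫})`: the extension of `K` generated by all roots of unity whose order is `4` or
an odd prime, and not divisible by the characteristic of `K`. -/
def cyclo2P (K : Type*) [Field K] : IntermediateField K (AlgebraicClosure K) :=
  IntermediateField.adjoin K
    {x : AlgebraicClosure K |
      ∃ n : ℕ, (n = 4 ∨ (n.Prime ∧ Odd n)) ∧ ¬ (ringChar K ∣ n) ∧ IsPrimitiveRoot x n}

/-- The set of roots of unity of order exactly `n` in the algebraic closure of `K`. -/
def primRoots (K : Type*) [Field K] (n : ℕ) : Set (AlgebraicClosure K) :=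
  {x | IsPrimitiveRoot x n}

/-- The set of roots of unity of order `ℓ^n` for `n ≤ t` (all of them if `t = ∞`). -/
def pPowRoots (K : Type*) [Field K] (ℓ : ℕ) (t : ℕ∞) : Set (AlgebraicClosure K) :=
  {x | ∃ n : ℕ, (n : ℕ∞) ≤ t ∧ IsPrimitiveRoot x (ℓ ^ n)}

/-- The set of units that are roots of unity of order `ℓ^n` for `n ≤ t`. -/
def pPowRootsUnits (K : Type*) [Field K] (ℓ : ℕ) (t : ℕ∞) : Set (AlgebraicClosure K)ˣ :=
  {x | ∃ n : ℕ, (n : ℕ∞) ≤ t ∧ IsPrimitiveRoot (x : AlgebraicClosure K) (ℓ ^ n)}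

/-!
The extension `F = K(ζ_{2𝒫})` of `K` is abelian Galois.

Let `x ∈ F^×` with `x ^ m ∈ K`, and let `σ ∈ Gal(F/K)` act on the `m`-th roots of unity as
`ζ ↦ ζ ^ c`. Every `τ` multiplies `x` by some `m`-th root of unity `ζ`; since `σ` and `τ` commute,
it multiplies both `σ x` and `x ^ c` by `ζ ^ c`, so `σ x / x ^ c ∈ K`. As `σ x / x` is a root of
unity, `x ^ (c - 1)`, and hence by Bézout also `x ^ gcd (c - 1, m)`, lies in `K` up to an `m`-th
root of unity. For `m = 2 ^ n` and `σ` moving `ζ₄` we have `c ≡ 3` modulo `4`, so the gcd is `2`: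
`x ^ 2 ∈ K` up to a root of unity of `2`-power order, whose square root is again in `F`.

For the second equality, the conjugates of a radical `r` of `2`-power order differ from it by
elements of `F`, so `σ ↦ σ r / r` is a character of `Gal(K̄/F)`. Elements of `K(√[2^∞]{K^×})` are
`K`-linear combinations of such radicals, and by Dedekind's independence of characters only the
terms with trivial character, that is those with `r ∈ F`, contribute to an element of `F`.
-/

section RootsOfUnity

variable {K E : Type*} [Field K] [Field E] [Algebra K E]

lemma exists_isPrimitiveRoot_prime_pow {M : Type*} [CommMonoid M] {p n : ℕ} (hp : p.Prime) {x : M}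
    (hx : x ^ p ^ n = 1) : ∃ m, IsPrimitiveRoot x (p ^ m) := by
  have := Fact.mk hp
  obtain ⟨m, hm⟩ := exists_orderOf_eq_prime_pow_iff.2 ⟨n, hx⟩
  exact ⟨m, hm ▸ IsPrimitiveRoot.orderOf x⟩

lemma exists_forall_apply_eq_zpow (σ : Gal(E/K)) (m : ℕ) [NeZero m] :
    ∃ c : ℤ, ∀ ζ : E, ζ ^ m = 1 → σ ζ = ζ ^ c := by
  obtain ⟨c, hc⟩ := rootsOfUnity.integer_power_of_ringEquiv m (σ : E ≃+* E)
  refine ⟨c, fun ζ hζ ↦ ?_⟩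
  simpa using hc (rootsOfUnity.mkOfPowEq ζ hζ)

lemma apply_div_self_pow_eq_one {m : ℕ} {x : E} (hx0 : x ≠ 0)
    (hx : x ^ m ∈ (⊥ : IntermediateField K E)) (σ : Gal(E/K)) : (σ x / x) ^ m = 1 := by
  obtain ⟨a, ha⟩ := IntermediateField.mem_bot.1 hx
  rw [div_pow, ← map_pow, ← ha, σ.commutes, ha, div_self (pow_ne_zero m hx0)]

end RootsOfUnity

section AbelianExtension

variable {K E : Type*} [Field K] [Field E] [Algebra K E] {m : ℕ} {x : E} {σ : Gal(E/K)} {c : ℤ}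

lemma apply_div_zpow_mem_bot [IsAbelianGalois K E] (hx0 : x ≠ 0)
    (hx : x ^ m ∈ (⊥ : IntermediateField K E)) (hσ : ∀ ζ : E, ζ ^ m = 1 → σ ζ = ζ ^ c) :
    σ x / x ^ c ∈ (⊥ : IntermediateField K E) := by
  refine (InfiniteGalois.mem_bot_iff_fixed _).2 fun τ ↦ ?_
  obtain ⟨ζ, hζ, hτx⟩ : ∃ ζ, ζ ^ m = 1 ∧ τ x = ζ * x :=
    ⟨τ x / x, apply_div_self_pow_eq_one hx0 hx τ, (div_mul_cancel₀ _ hx0).symm⟩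
  have hζ0 : ζ ≠ 0 := by
    rintro rfl
    exact hx0 ((map_eq_zero τ).1 (by rw [hτx, zero_mul]))
  have hcomm : τ (σ x) = σ (τ x) := DFunLike.congr_fun (mul_comm' τ σ) x
  calc τ (σ x / x ^ c) = σ (τ x) / τ x ^ c := by rw [map_div₀, map_zpow₀, hcomm]
    _ = ζ ^ c * σ x / (ζ ^ c * x ^ c) := by rw [hτx, map_mul, hσ ζ hζ, mul_zpow]
    _ = σ x / x ^ c := mul_div_mul_left _ _ (zpow_ne_zero c hζ0)

lemma exists_mul_pow_gcd_mem_bot [IsAbelianGalois K E] (hx0 : x ≠ 0)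
    (hx : x ^ m ∈ (⊥ : IntermediateField K E)) (hσ : ∀ ζ : E, ζ ^ m = 1 → σ ζ = ζ ^ c) :
    ∃ ζ : E, ζ ^ m = 1 ∧ ζ * x ^ (c - 1).gcd m ∈ (⊥ : IntermediateField K E) := by
  set w := σ x / x with hw
  have hwm : w ^ m = 1 := apply_div_self_pow_eq_one hx0 hx σ
  have hwx : w * x ^ (1 - c) ∈ (⊥ : IntermediateField K E) := by
    convert apply_div_zpow_mem_bot hx0 hx hσ using 1
    rw [hw, zpow_sub₀ hx0, zpow_one]
    field_simp
  set a := (c - 1).gcdA m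
  set b := (c - 1).gcdB m
  have bezout : ((c - 1).gcd m : ℤ) = (1 - c) * -a + m * b := by
    rw [Int.gcd_eq_gcd_ab]
    ring
  refine ⟨w ^ (-a), by rw [← zpow_natCast, zpow_comm, zpow_natCast, hwm, one_zpow], ?_⟩
  have key : w ^ (-a) * x ^ (c - 1).gcd m = (w * x ^ (1 - c)) ^ (-a) * (x ^ m) ^ b := by
    rw [← zpow_natCast x, bezout, zpow_add₀ hx0, zpow_mul, zpow_mul, zpow_natCast, mul_zpow,
      mul_assoc]
  exact key ▸ mul_mem (zpow_mem hwx _) (zpow_mem hx _)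

lemma gcd_two_pow_eq_two {a : ℤ} (h2 : 2 ∣ a) (h4 : ¬ 4 ∣ a) {n : ℕ} (hn : n ≠ 0) :
    a.gcd (2 ^ n : ℕ) = 2 := by
  obtain ⟨k, -, hgcd⟩ := (Nat.dvd_prime_pow Nat.prime_two).1
    (Int.natCast_dvd_natCast.1 (Int.gcd_dvd_right a (2 ^ n : ℕ)))
  have hk1 : 1 ≤ k := by
    rw [← Nat.pow_dvd_pow_iff_le_right one_lt_two, ← hgcd, pow_one]
    exact Int.dvd_gcd h2 (by exact_mod_cast dvd_pow_self 2 hn)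
  have hk2 : k < 2 := by
    by_contra! hk2
    refine h4 (dvd_trans ?_ (Int.gcd_dvd_left a (2 ^ n : ℕ)))
    rw [hgcd]
    exact_mod_cast pow_dvd_pow 2 hk2
  rw [hgcd, show k = 1 by lia, pow_one]

lemma gcd_sub_one_two_pow_eq_two_of_apply_ne {i : E} (h2 : (2 : E) ≠ 0) (hi : i ^ 4 = 1)
    (hσi : σ i ≠ i) {n : ℕ} (hn : 2 ≤ n) (hσ : ∀ ζ : E, ζ ^ 2 ^ n = 1 → σ ζ = ζ ^ c) :
    (c - 1).gcd (2 ^ n : ℕ) = 2 := by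
  have hi0 : i ≠ 0 := by
    rintro rfl
    exact hσi (map_zero σ)
  have hodd : Odd c := by
    by_contra hc
    have hneg : σ (-1) = (-1) ^ c := hσ _ ((Nat.even_pow.2 ⟨even_two, by lia⟩).neg_one_pow)
    rw [(Int.not_odd_iff_even.1 hc).neg_one_zpow, map_neg, map_one] at hneg
    exact h2 (by linear_combination -hneg)
  refine gcd_two_pow_eq_two (hodd.sub_odd odd_one).two_dvd (fun ⟨k, hk⟩ ↦ hσi ?_) (by lia)
  have hin : i ^ 2 ^ n = 1 := by
    obtain ⟨j, hj⟩ : 4 ∣ 2 ^ n := pow_dvd_pow 2 hn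
    rw [hj, pow_mul, hi, one_pow]
  rw [hσ i hin, ← sub_add_cancel c 1, hk, zpow_add₀ hi0, zpow_mul, zpow_one]
  norm_cast
  rw [hi, one_zpow, one_mul]

lemma exists_sq_eq_of_pow_two_pow_eq_one {n : ℕ} {ζ ω : E} (hζ : ζ ^ 2 ^ n = 1)
    (hω : IsPrimitiveRoot ω (2 ^ (n + 1))) : ∃ e : E, e ^ 2 ^ (n + 1) = 1 ∧ e ^ 2 = ζ := by
  have hω2 : IsPrimitiveRoot (ω ^ 2) (2 ^ n) := hω.pow (by positivity) (pow_succ' 2 n)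
  obtain ⟨j, -, rfl⟩ := hω2.eq_pow_of_pow_eq_one hζ
  exact ⟨ω ^ j, by rw [pow_right_comm, hω.pow_eq_one, one_pow], pow_right_comm ω j 2⟩

lemma exists_apply_ne_of_isPrimitiveRoot [IsGalois K E] {n : ℕ} {i : E} (hi : IsPrimitiveRoot i n)
    (hK : ¬ ∃ z : K, IsPrimitiveRoot z n) : ∃ σ : Gal(E/K), σ i ≠ i := by
  by_contra! hfix
  obtain ⟨z, rfl⟩ := (InfiniteGalois.mem_range_algebraMap_iff_fixed i).2 hfix
  exact hK ⟨z, hi.of_map_of_injective (algebraMap K E).injective⟩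

theorem exists_mul_eq_of_pow_two_pow_mem_bot [IsAbelianGalois K E]
    (hK : ¬ ∃ z : K, IsPrimitiveRoot z 4) (hE : ∀ n : ℕ, ∃ ζ : E, IsPrimitiveRoot ζ (2 ^ n))
    {n : ℕ} (hx0 : x ≠ 0) (hx : x ^ 2 ^ n ∈ (⊥ : IntermediateField K E)) :
    ∃ e y : E, e * y = x ∧ (∃ k, e ^ 2 ^ k = 1) ∧ y ^ 2 ∈ (⊥ : IntermediateField K E) := by
  obtain ⟨i, hi⟩ : ∃ i : E, IsPrimitiveRoot i 4 := hE 2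
  obtain ⟨σ, hσi⟩ := exists_apply_ne_of_isPrimitiveRoot hi hK
  have h2 : (2 : E) ≠ 0 := by
    obtain ⟨ζ, hζ⟩ := hE 1
    have : NeZero (2 ^ 1) := ⟨two_ne_zero⟩
    exact_mod_cast hζ.neZero'.ne
  obtain ⟨c, hc⟩ := exists_forall_apply_eq_zpow σ (2 ^ (n + 2))
  have hx' : x ^ 2 ^ (n + 2) ∈ (⊥ : IntermediateField K E) := by
    rw [pow_add, pow_mul]
    exact pow_mem hx _
  obtain ⟨ζ, hζ, hζx⟩ := exists_mul_pow_gcd_mem_bot hx0 hx' hc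
  rw [gcd_sub_one_two_pow_eq_two_of_apply_ne h2 hi.pow_eq_one hσi (by lia) hc] at hζx
  obtain ⟨ω, hω⟩ := hE (n + 3)
  obtain ⟨e, he, rfl⟩ := exists_sq_eq_of_pow_two_pow_eq_one hζ hω
  have he0 : e ≠ 0 := ne_zero_pow (n := 2 ^ (n + 3)) (by positivity) (he ▸ one_ne_zero)
  exact ⟨e⁻¹, e * x, inv_mul_cancel_left₀ he0 x, ⟨_, by rw [inv_pow, he, inv_one]⟩,
    mul_pow e x 2 ▸ hζx⟩

end AbelianExtension

section Kummer

variable {K L : Type*} [Field K] [Field L] [Algebra K L]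

lemma mem_range_algebraMap_of_isSeparable_of_forall_fixed [Normal K L] {x : L}
    (hx : IsSeparable K x) (hfix : ∀ σ : Gal(L/K), σ x = x) : x ∈ Set.range (algebraMap K L) := by
  by_contra hnot
  obtain ⟨y, hne, hconj⟩ := (notMem_iff_exists_ne_and_isConjRoot hx (Normal.splits' x)).1
    (mt Algebra.mem_bot.1 hnot)
  obtain ⟨σ, rfl⟩ := hconj.symm.exists_algEquiv
  exact hne (hfix σ).symm

lemma sum_filter_eq_of_forall_sum_mul_monoidHom_eq {G ι R : Type*} [MulOneClass G] [CommRing R]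
    [IsDomain R] (χ : ι → G →* R) [DecidablePred (χ · = 1)] {s : Finset ι} {a : ι → R} {z : R}
    (h : ∀ g, ∑ j ∈ s, a j * χ j g = z) : ∑ j ∈ s with χ j = 1, a j = z := by
  classical
  have hzero : ∑ j ∈ s, Finsupp.single (χ j) (a j) - Finsupp.single 1 z = 0 := by
    refine linearIndependent_iff.1 (linearIndependent_monoidHom G R) _ ?_
    ext g
    simp [Finsupp.linearCombination_single, h]
  have hone := DFunLike.congr_fun hzero 1
  simpa [Finsupp.single_apply, sub_eq_zero, Finset.sum_filter] using hone

variable (F : IntermediateField K L)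

/-- The Kummer character `σ ↦ σ r / r` of `Gal(L/F)`, for `r` such that all these quotients
lie in `F`, which makes it multiplicative. -/
def kummerCharacter (r : Lˣ) (hr : ∀ σ : Gal(L/F), σ r / r ∈ F) : Gal(L/F) →* L where
  toFun σ := σ r / r
  map_one' := by simp
  map_mul' σ τ := by
    have hσ : σ (τ r / r) = τ r / r := σ.commutes ⟨_, hr τ⟩
    calc (σ * τ) r / r = σ (τ r / r * r) / r := by rw [div_mul_cancel₀ _ r.ne_zero]; rfl
      _ = σ r / r * (τ r / r) := by rw [map_mul, hσ]; ring

variable {F}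

lemma mem_span_inter_of_mem_span [Normal F L] {M : Set Lˣ}
    (hM : ∀ r ∈ M, ∀ σ : Gal(L/F), σ (r : L) / r ∈ F) (hsep : ∀ r ∈ M, IsSeparable F (r : L))
    {z : L} (hzF : z ∈ F) (hz : z ∈ Submodule.span K (Units.val '' M)) :
    z ∈ Submodule.span K ((F : Set L) ∩ Units.val '' M) := by
  classical
  rw [Set.image_eq_range] at hz
  obtain ⟨a, rfl⟩ := Finsupp.mem_span_range_iff_exists_finsupp.1 hz
  let χ (r : M) : Gal(L/F) →* L := kummerCharacter F r (hM r r.2)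
  have hsum (σ : Gal(L/F)) :
      ∑ r ∈ a.support, a r • (r.1 : L) * χ r σ = a.sum fun r c ↦ c • (r.1 : L) :=
    calc ∑ r ∈ a.support, a r • (r.1 : L) * (σ r.1 / r.1) = ∑ r ∈ a.support, a r • σ r.1 :=
          Finset.sum_congr rfl fun r _ ↦ by rw [smul_mul_assoc, mul_div_cancel₀ _ r.1.ne_zero]
      _ = σ (∑ r ∈ a.support, a r • (r.1 : L)) := by
          rw [map_sum]
          exact Finset.sum_congr rfl fun r _ ↦ (map_smul (σ.restrictScalars K) _ _).symm
      _ = ∑ r ∈ a.support, a r • (r.1 : L) := σ.commutes ⟨_, hzF⟩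
  rw [← sum_filter_eq_of_forall_sum_mul_monoidHom_eq χ hsum]
  refine sum_mem fun r hr ↦ Submodule.smul_mem _ _ (Submodule.subset_span ⟨?_, r, r.2, rfl⟩)
  have hfix (σ : Gal(L/F)) : σ (r.1 : L) = r.1 := by
    have : σ (r.1 : L) / r.1 = 1 := DFunLike.congr_fun (Finset.mem_filter.1 hr).2 σ
    rwa [div_eq_one_iff_eq (Units.ne_zero _)] at this
  obtain ⟨y, hy⟩ := mem_range_algebraMap_of_isSeparable_of_forall_fixed (hsep r r.2) hfix
  exact hy ▸ y.2

lemma toSubmodule_adjoin_submonoid_eq_span [Algebra.IsAlgebraic K L] (M : Submonoid L) :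
    (IntermediateField.adjoin K (M : Set L)).toSubalgebra.toSubmodule = Submodule.span K M := by
  rw [IntermediateField.adjoin_toSubalgebra, Algebra.adjoin_eq_span, Submonoid.closure_eq]

theorem inf_adjoin_eq_adjoin_inter [Normal K L] {M : Subgroup Lˣ}
    (hM : ∀ r ∈ M, ∀ σ : Gal(L/K), σ (r : L) / r ∈ F) (hsep : ∀ r ∈ M, IsSeparable K (r : L)) :
    F ⊓ IntermediateField.adjoin K (Units.val '' (M : Set Lˣ)) =
      IntermediateField.adjoin K ((F : Set L) ∩ Units.val '' (M : Set Lˣ)) := by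
  refine le_antisymm ?_ (le_inf ?_ ?_)
  · rintro z ⟨hzF, hz⟩
    have hz' : z ∈ Submodule.span K (Units.val '' (M : Set Lˣ)) :=
      (toSubmodule_adjoin_submonoid_eq_span (M.toSubmonoid.map (Units.coeHom L))).le hz
    have hspan := mem_span_inter_of_mem_span (F := F)
      (fun r hr σ ↦ hM r hr (σ.restrictScalars K)) (fun r hr ↦ (hsep r hr).tower_top F) hzF hz'
    exact Submodule.span_le (p := (IntermediateField.adjoin K _).toSubalgebra.toSubmodule).2
      (IntermediateField.subset_adjoin K _) hspan
  · exact IntermediateField.adjoin_le_iff.2 Set.inter_subset_left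
  · exact IntermediateField.adjoin.mono _ _ _ Set.inter_subset_right

lemma adjoin_val_image_closure (S : Set Lˣ) :
    IntermediateField.adjoin K (Units.val '' (Subgroup.closure S : Set Lˣ)) =
      IntermediateField.adjoin K (Units.val '' S) := by
  refine le_antisymm (IntermediateField.adjoin_le_iff.2 ?_)
    (IntermediateField.adjoin.mono _ _ _ (Set.image_mono Subgroup.subset_closure))
  rintro _ ⟨x, hx, rfl⟩
  induction hx using Subgroup.closure_induction with
  | mem x hx => exact IntermediateField.subset_adjoin K _ ⟨x, hx, rfl⟩
  | one => exact one_mem _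
  | mul x y _ _ hx hy => exact mul_mem hx hy
  | inv x _ hx => exact x.val_inv_eq_inv_val ▸ inv_mem hx

lemma adjoin_val_image_closure_sup (S : Set Lˣ) (N : Subgroup Lˣ) :
    IntermediateField.adjoin K (Units.val '' ((Subgroup.closure S ⊔ N : Subgroup Lˣ) : Set Lˣ)) =
      IntermediateField.adjoin K (Units.val '' S ∪ Units.val '' (N : Set Lˣ)) := by
  rw [← Set.image_union, ← adjoin_val_image_closure (S ∪ N), Subgroup.closure_union,
    Subgroup.closure_eq]

end Kummer

section Radicals

variable {K L : Type*} [Field K] [Field L] [Algebra K L]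

lemma isSeparable_of_pow_mem_bot {m : ℕ} (hm : (m : K) ≠ 0) {x : L} (hx0 : x ≠ 0)
    (hx : x ^ m ∈ (⊥ : IntermediateField K L)) : IsSeparable K x := by
  obtain ⟨a, ha⟩ := IntermediateField.mem_bot.1 hx
  have ha0 : a ≠ 0 := by
    rintro rfl
    exact pow_ne_zero m hx0 (by rw [← ha, map_zero])
  exact (Polynomial.separable_X_pow_sub_C a hm ha0).of_dvd (minpoly.dvd K x (by simp [ha]))

lemma isCyclotomicExtension_adjoin_isPrimitiveRoot {S : Set ℕ} (h0 : 0 ∉ S)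
    (hS : ∀ n ∈ S, ∃ ζ : L, IsPrimitiveRoot ζ n) :
    IsCyclotomicExtension S K
      (IntermediateField.adjoin K {x : L | ∃ n ∈ S, IsPrimitiveRoot x n}) := by
  have hadjoin : IntermediateField.adjoin K {x : L | ∃ n ∈ S, IsPrimitiveRoot x n} =
      IntermediateField.adjoin K {x : L | ∃ n ∈ S, n ≠ 0 ∧ x ^ n = 1} := by
    refine le_antisymm (IntermediateField.adjoin.mono _ _ _ ?_)
      (IntermediateField.adjoin_le_iff.2 ?_)
    · rintro x ⟨n, hn, hx⟩
      exact ⟨n, hn, ne_of_mem_of_not_mem hn h0, hx.pow_eq_one⟩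
    · rintro x ⟨n, hn, hn0, hx⟩
      obtain ⟨ζ, hζ⟩ := hS n hn
      have := NeZero.mk hn0
      obtain ⟨j, -, rfl⟩ := hζ.eq_pow_of_pow_eq_one hx
      have hζmem := IntermediateField.subset_adjoin K {x : L | ∃ n ∈ S, IsPrimitiveRoot x n}
        ⟨n, hn, hζ⟩
      exact pow_mem hζmem j
  rw [hadjoin]
  exact IntermediateField.isCyclotomicExtension_adjoin_of_exists_isPrimitiveRoot S K L
    fun n hn _ ↦ hS n hn

end Radicals

section AlgebraicClosure

variable {K : Type*} [Field K]

lemma exists_isPrimitiveRoot_algebraicClosure {n : ℕ} (hn : (n : K) ≠ 0) :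
    ∃ ζ : AlgebraicClosure K, IsPrimitiveRoot ζ n := by
  have : NeZero (n : AlgebraicClosure K) :=
    ⟨by simpa using (map_ne_zero (algebraMap K (AlgebraicClosure K))).2 hn⟩
  exact HasEnoughRootsOfUnity.exists_primitiveRoot _ n

instance isAbelianGalois_cyclo2P : IsAbelianGalois K (cyclo2P K) := by
  let S : Set ℕ := {n | (n = 4 ∨ (n.Prime ∧ Odd n)) ∧ ¬ ringChar K ∣ n}
  have hcast (n : ℕ) (hn : n ∈ S) : (n : K) ≠ 0 := mt (ringChar.dvd (R := K)) hn.2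
  have := isCyclotomicExtension_adjoin_isPrimitiveRoot (K := K) (L := AlgebraicClosure K) (S := S)
    (fun h0 ↦ hcast 0 h0 Nat.cast_zero)
    fun n hn ↦ exists_isPrimitiveRoot_algebraicClosure (hcast n hn)
  have hcyc : cyclo2P K = IntermediateField.adjoin K {x | ∃ n ∈ S, IsPrimitiveRoot x n} := by
    simp only [cyclo2P, S, Set.mem_ofPred_eq, and_assoc]
  rw [hcyc]
  exact IsCyclotomicExtension.isAbelianGalois S K _

lemma mem_radGroup {m : ℕ} {x : (AlgebraicClosure K)ˣ} :
    x ∈ radGroup K m ↔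
      (x : AlgebraicClosure K) ^ m ∈ (⊥ : IntermediateField K (AlgebraicClosure K)) :=
  IntermediateField.mem_bot.symm

lemma image_val_unitsIn_inf (F : IntermediateField K (AlgebraicClosure K))
    (M : Subgroup (AlgebraicClosure K)ˣ) :
    Units.val '' ((unitsIn F ⊓ M : Subgroup _) : Set (AlgebraicClosure K)ˣ) =
      (F : Set (AlgebraicClosure K)) ∩ Units.val '' (M : Set (AlgebraicClosure K)ˣ) := by
  ext x
  constructor
  · rintro ⟨x, ⟨hxF, hxM⟩, rfl⟩
    exact ⟨hxF, x, hxM, rfl⟩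
  · rintro ⟨hxF, x, hxM, rfl⟩
    exact ⟨x, ⟨hxF, hxM⟩, rfl⟩

lemma image_val_pPowRootsUnits {ℓ : ℕ} (hℓ : ℓ ≠ 0) (t : ℕ∞) :
    Units.val '' pPowRootsUnits K ℓ t = pPowRoots K ℓ t := by
  ext x
  constructor
  · rintro ⟨x, hx, rfl⟩
    exact hx
  · rintro ⟨n, hn, hx⟩
    exact ⟨Units.mk0 x (hx.ne_zero (pow_ne_zero n hℓ)), ⟨n, hn, hx⟩, rfl⟩

variable {F : IntermediateField K (AlgebraicClosure K)}

lemma closure_pPowRootsUnits_le {ℓ : ℕ}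
    (hF : ∀ (n : ℕ) (x : AlgebraicClosure K), IsPrimitiveRoot x (ℓ ^ n) → x ∈ F) :
    Subgroup.closure (pPowRootsUnits K ℓ ⊤) ≤ unitsIn F ⊓ radInf K ℓ := by
  rw [Subgroup.closure_le]
  rintro x ⟨n, -, hx⟩
  exact ⟨hF n x hx, n, mem_radGroup.2 (hx.pow_eq_one ▸ one_mem _)⟩

lemma radGroup_le_radInf (ℓ : ℕ) : radGroup K ℓ ≤ radInf K ℓ :=
  fun _ hx ↦ ⟨1, (pow_one ℓ).symm ▸ hx⟩

lemma exists_isPrimitiveRoot_two_pow_mem (hchar : ringChar K ≠ 2)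
    (hF : ∀ (n : ℕ) (x : AlgebraicClosure K), IsPrimitiveRoot x (2 ^ n) → x ∈ F) (n : ℕ) :
    ∃ ζ : F, IsPrimitiveRoot ζ (2 ^ n) := by
  have h2 : ((2 ^ n : ℕ) : K) ≠ 0 := by
    rw [Nat.cast_pow]
    exact pow_ne_zero n (Ring.two_ne_zero hchar)
  obtain ⟨ζ, hζ⟩ := exists_isPrimitiveRoot_algebraicClosure h2
  exact ⟨⟨ζ, hF n ζ hζ⟩, IsPrimitiveRoot.coe_submonoidClass_iff.1 hζ⟩

theorem unitsIn_inf_radInf_two_eq [IsAbelianGalois K F] (hchar : ringChar K ≠ 2)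
    (h4 : ¬ ∃ z : K, IsPrimitiveRoot z 4)
    (hF : ∀ (n : ℕ) (x : AlgebraicClosure K), IsPrimitiveRoot x (2 ^ n) → x ∈ F) :
    unitsIn F ⊓ radInf K 2 =
      Subgroup.closure (pPowRootsUnits K 2 ⊤) ⊔ (unitsIn F ⊓ radGroup K 2) := by
  refine le_antisymm ?_
    (sup_le (closure_pPowRootsUnits_le hF) (inf_le_inf_left _ (radGroup_le_radInf 2)))
  rintro x ⟨hxF, n, a, ha⟩
  obtain ⟨e, y, hey, ⟨k, hek⟩, hy⟩ := exists_mul_eq_of_pow_two_pow_mem_bot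
    (x := (⟨x, hxF⟩ : F)) (n := n) h4 (exists_isPrimitiveRoot_two_pow_mem hchar hF)
    (fun h ↦ x.ne_zero (congrArg Subtype.val h))
    (IntermediateField.mem_bot.2 ⟨a, Subtype.ext ha⟩)
  have hxe : e.1 * y.1 = x := congrArg Subtype.val hey
  have hey0 : e.1 * y.1 ≠ 0 := hxe ▸ x.ne_zero
  have hxmul : x = Units.mk0 e.1 (left_ne_zero_of_mul hey0) *
      Units.mk0 y.1 (right_ne_zero_of_mul hey0) := Units.ext hxe.symm
  obtain ⟨m, hm⟩ := exists_isPrimitiveRoot_prime_pow Nat.prime_two (congrArg Subtype.val hek)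
  obtain ⟨b, hb⟩ := IntermediateField.mem_bot.1 hy
  rw [hxmul]
  exact Subgroup.mul_mem_sup (Subgroup.subset_closure ⟨m, le_top, hm⟩)
    ⟨y.2, b, congrArg Subtype.val hb⟩

theorem inf_adjoin_radInf_eq {ℓ : ℕ} (hℓ : ℓ.Prime) (hℓK : (ℓ : K) ≠ 0)
    (hF : ∀ (n : ℕ) (x : AlgebraicClosure K), IsPrimitiveRoot x (ℓ ^ n) → x ∈ F) :
    F ⊓ IntermediateField.adjoin K (Units.val '' (radInf K ℓ : Set (AlgebraicClosure K)ˣ)) =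
      IntermediateField.adjoin K
        (Units.val '' ((unitsIn F ⊓ radInf K ℓ : Subgroup _) : Set (AlgebraicClosure K)ˣ)) := by
  rw [image_val_unitsIn_inf]
  refine inf_adjoin_eq_adjoin_inter ?_ ?_
  · rintro x ⟨n, hx⟩ σ
    obtain ⟨m, hm⟩ := exists_isPrimitiveRoot_prime_pow hℓ
      (apply_div_self_pow_eq_one x.ne_zero (mem_radGroup.1 hx) σ)
    exact hF m _ hm
  · rintro x ⟨n, hx⟩
    exact isSeparable_of_pow_mem_bot (by exact_mod_cast pow_ne_zero n hℓK) x.ne_zero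
      (mem_radGroup.1 hx)

theorem stmt3_general [IsAbelianGalois K F] (hchar : ringChar K ≠ 2)
    (h4 : ¬ ∃ z : K, IsPrimitiveRoot z 4)
    (hF : ∀ (n : ℕ) (x : AlgebraicClosure K), IsPrimitiveRoot x (2 ^ n) → x ∈ F) :
    unitsIn F ⊓ radInf K 2 =
      Subgroup.closure (pPowRootsUnits K 2 ⊤) ⊔ (unitsIn F ⊓ radGroup K 2) ∧
    F ⊓ IntermediateField.adjoin K (Units.val '' (radInf K 2 : Set (AlgebraicClosure K)ˣ)) =
      IntermediateField.adjoin K (pPowRoots K 2 ⊤ ∪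
        Units.val '' ((unitsIn F ⊓ radGroup K 2) : Set (AlgebraicClosure K)ˣ)) := by
  have hunits := unitsIn_inf_radInf_two_eq hchar h4 hF
  have h2 : ((2 : ℕ) : K) ≠ 0 := by exact_mod_cast Ring.two_ne_zero hchar
  refine ⟨hunits, ?_⟩
  rw [inf_adjoin_radInf_eq Nat.prime_two h2 hF, hunits, adjoin_val_image_closure_sup,
    image_val_pPowRootsUnits two_ne_zero, Subgroup.coe_inf]
  rfl

end AlgebraicClosure

/-- Theorem 1.2 (first case): if `char K ≠ 2`, `ζ₄ ∉ K` and all `2`-power order roots of unity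
lie in `K(ζ_{2𝒫})`, then `K(ζ_{2𝒫}) ∩ √[2^∞]{K^×} = ⟨ζ_{2^∞}, K(ζ_{2𝒫}) ∩ √{K^×}⟩` and
`K(ζ_{2𝒫}) ∩ K(√[2^∞]{K^×}) = K(ζ_{2^∞}, K(ζ_{2𝒫}) ∩ √{K^×})`. -/
theorem stmt3 (K : Type*) [Field K] (hchar : ringChar K ≠ 2)
    (h4 : ¬ ∃ z : K, IsPrimitiveRoot z 4)
    (hall : ∀ (n : ℕ) (x : AlgebraicClosure K), IsPrimitiveRoot x (2 ^ n) → x ∈ cyclo2P K) :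
    unitsIn (cyclo2P K) ⊓ radInf K 2 =
      Subgroup.closure (pPowRootsUnits K 2 ⊤) ⊔ (unitsIn (cyclo2P K) ⊓ radGroup K 2) ∧
    cyclo2P K ⊓
        IntermediateField.adjoin K (Units.val '' (radInf K 2 : Set (AlgebraicClosure K)ˣ)) =
      IntermediateField.adjoin K (pPowRoots K 2 ⊤ ∪
        Units.val '' ((unitsIn (cyclo2P K) ⊓ radGroup K 2) : Set (AlgebraicClosure K)ˣ)) :=
  stmt3_general hchar h4 hall

end
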